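/- arXiv:2011.01702 — 2 statements merged into one kernel-verified Lean document; each statement's English description precedes it below -/
import Mathlib

section
/- Let T be a triangulated category with a semiorthogonal decomposition T = ⟨T₁, T₂⟩, and let T₁^{≤0} and T₂^{≤0} be t-structures on T₁ and T₂ respectively that are compatible in T, so that T^{≤0} := T₂^{≤0} * (T₁^{≤0}[1]) is a t-structure on T. If T₁^{≤0} and T₂^{≤0} are both bounded, then T^{≤0} is a bounded t-structure on T. -/
open CategoryTheory Category Limits Pretriangulated

namespace Paper

universe v u

variable {C : Type u} [Category.{v} C] [HasZeroObject C] [Preadditive C]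
  [HasShift C ℤ] [∀ n : ℤ, (shiftFunctor C n).Additive] [Pretriangulated C]

/-- The right orthogonal of a set of objects: objects receiving only zero maps. -/
def rOrth (S : Set C) : Set C := {Y | ∀ X ∈ S, ∀ f : X ⟶ Y, f = 0}

/-- Shift of a set of objects by `n` (closed under isomorphism). -/
def shSet (S : Set C) (n : ℤ) : Set C := {Y | ∃ X ∈ S, Nonempty (Y ≅ X⟦n⟧)}

/-- The `*` operation on sets of objects of a triangulated category. -/
def star (X Y : Set C) : Set C :=
  {Z | ∃ (A : C) (_ : A ∈ X) (B : C) (_ : B ∈ Y) (f : A ⟶ Z) (g : Z ⟶ B)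
    (h : B ⟶ A⟦(1 : ℤ)⟧), Triangle.mk f g h ∈ distTriang C}

/-- A strictly full triangulated subcategory, encoded as a set of objects. -/
structure IsTriangulatedSub (S : Set C) : Prop where
  zero : ∀ X : C, IsZero X → X ∈ S
  isoClosed : ∀ {X Y : C}, (X ≅ Y) → X ∈ S → Y ∈ S
  shift : ∀ (n : ℤ), ∀ X ∈ S, X⟦n⟧ ∈ S
  ext₂ : ∀ T ∈ distTriang C, T.obj₁ ∈ S → T.obj₃ ∈ S → T.obj₂ ∈ S

/-- A t-structure on the full triangulated subcategory `S ⊆ C`, given by its aisle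
`le` (playing the role of `S^{≤ 0}`).  The coaisle `S^{≥ 1}` is `S ∩ rOrth le`. -/
structure IsTStructureOn (S le : Set C) : Prop where
  subset : le ⊆ S
  isoClosed : ∀ {X Y : C}, (X ≅ Y) → X ∈ le → Y ∈ le
  shift : ∀ X ∈ le, X⟦(1 : ℤ)⟧ ∈ le
  exists_triangle : ∀ E ∈ S, ∃ (A B : C) (_ : A ∈ le) (_ : B ∈ S ∩ rOrth le)
    (f : A ⟶ E) (g : E ⟶ B) (h : B ⟶ A⟦(1 : ℤ)⟧), Triangle.mk f g h ∈ distTriang C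

/-- `S^{≤ i} := S^{≤ 0}[-i]`. -/
def leN (le : Set C) (i : ℤ) : Set C := shSet le (-i)

/-- `S^{≥ j} := S^{≥ 1}[-j+1]`. -/
def geN (S le : Set C) (j : ℤ) : Set C := shSet (S ∩ rOrth le) (1 - j)

/-- The heart `S^{≤ 0} ∩ S^{≥ 0}` of a t-structure on `S`. -/
def heartOn (S le : Set C) : Set C := leN le 0 ∩ geN S le 0

/-- Boundedness of a t-structure on `S`. -/
def IsBoundedOn (S le : Set C) : Prop := ∀ E ∈ S, ∃ i j : ℤ, E ∈ leN le i ∧ E ∈ geN S le j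

/-- Non-degeneracy of a t-structure on `S`. -/
def IsNonDegenerateOn (S le : Set C) : Prop :=
  (∀ E : C, (∀ i : ℤ, E ∈ leN le i) → IsZero E) ∧
  (∀ E : C, (∀ j : ℤ, E ∈ geN S le j) → IsZero E)

/-- A semiorthogonal decomposition `C = ⟨S₁, S₂⟩`. -/
structure IsSOD (S₁ S₂ : Set C) : Prop where
  sub₁ : IsTriangulatedSub S₁
  sub₂ : IsTriangulatedSub S₂
  orth : ∀ X ∈ S₂, ∀ Y ∈ S₁, ∀ f : X ⟶ Y, f = 0
  exists_triangle : ∀ E : C, ∃ (A B : C) (_ : A ∈ S₂) (_ : B ∈ S₁)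
    (f : A ⟶ E) (g : E ⟶ B) (h : B ⟶ A⟦(1 : ℤ)⟧), Triangle.mk f g h ∈ distTriang C

/-- Compatibility of t-structures `le₁` on `S₁` and `le₂` on `S₂` in `C`:
`Hom(S₁^{≤0}, S₂^{≥1}) = 0`. -/
def Compatible (S₂ le₁ le₂ : Set C) : Prop :=
  ∀ X ∈ le₁, ∀ Y ∈ S₂ ∩ rOrth le₂, ∀ f : X ⟶ Y, f = 0

/-- The glued aisle `T^{≤0} := T₂^{≤0} * (T₁^{≤0}[1])`. -/
def glued (le₁ le₂ : Set C) : Set C := star le₂ (shSet le₁ 1)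

/-! An object `E` has a semiorthogonal triangle `E₂ ⟶ E ⟶ E₁`. Truncate `E₂` by the t-structure on
`S₂`, giving `A₂ ⟶ E₂ ⟶ B₂`, and `E₁` by the shifted t-structure on `S₁`, giving `A₁ ⟶ E₁ ⟶ B₁`.
Compatibility kills `A₁ ⟶ E₁ ⟶ E₂⟦1⟧ ⟶ B₂⟦1⟧`, so the maps `A₂ ⟶ E₂` and `A₁ ⟶ E₁` extend to a
morphism from a triangle `A₂ ⟶ A ⟶ A₁`. Instead of identifying the cone `B` of `A ⟶ E` as an
extension of `B₁` by `B₂`, which needs the octahedral axiom, we apply `Hom(X, -)` and the four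
lemmas: `Hom(X, B)` vanishes as soon as `Hom(X, B₁)` and `Hom(X, B₂)` do.

Boundedness says that `E⟦n⟧` lies in the aisle for `n ≫ 0` and in its right orthogonal for `n ≪ 0`;
both properties pass from `E₂` and `E₁` to `E` through the shifted semiorthogonal triangle. -/

section HomologicalFunctor

variable {D : Type*} [Category D] [Abelian D] (F : C ⥤ D) [F.IsHomological]
  [F.ShiftSequence ℤ] {T T' : Triangle C}

lemma isZero_shift_obj₃_iff (hT : T ∈ distTriang C) {n₀ n₁ : ℤ} (h : n₀ + 1 = n₁) :
    IsZero ((F.shift n₀).obj T.obj₃) ↔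
      Epi ((F.shift n₀).map T.mor₁) ∧ Mono ((F.shift n₁).map T.mor₁) := by
  rw [F.homologySequence_epi_shift_map_mor₁_iff T hT,
    F.homologySequence_mono_shift_map_mor₁_iff T hT n₀ n₁ h]
  exact (F.homologySequence_exact₃ T hT n₀ n₁ h).isZero_X₂_iff

/-- The morphism of six-term homology sequences induced by a morphism of triangles, in the form
required by the four lemmas. -/
noncomputable def homologySequenceHom (φ : T ⟶ T') {n₀ n₁ : ℤ} (h : n₀ + 1 = n₁) :
    F.homologySequenceComposableArrows₅ T n₀ n₁ h ⟶
      F.homologySequenceComposableArrows₅ T' n₀ n₁ h :=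
  ComposableArrows.homMk₅ ((F.shift n₀).map φ.hom₁) ((F.shift n₀).map φ.hom₂)
    ((F.shift n₀).map φ.hom₃) ((F.shift n₁).map φ.hom₁) ((F.shift n₁).map φ.hom₂)
    ((F.shift n₁).map φ.hom₃)
    ((CommSq.mk φ.comm₁).map (F.shift n₀)).w ((CommSq.mk φ.comm₂).map (F.shift n₀)).w
    (F.homologySequenceδ_naturality T T' φ n₀ n₁ h).symm
    ((CommSq.mk φ.comm₁).map (F.shift n₁)).w ((CommSq.mk φ.comm₂).map (F.shift n₁)).w

lemma isZero_shift_obj_of_cones (hT : T ∈ distTriang C) (hT' : T' ∈ distTriang C) (φ : T ⟶ T')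
    {B₁ B₂ B₃ : C}
    {g₁ : T'.obj₁ ⟶ B₁} {d₁ : B₁ ⟶ T.obj₁⟦(1 : ℤ)⟧} (h₁ : Triangle.mk φ.hom₁ g₁ d₁ ∈ distTriang C)
    {g₂ : T'.obj₂ ⟶ B₂} {d₂ : B₂ ⟶ T.obj₂⟦(1 : ℤ)⟧} (h₂ : Triangle.mk φ.hom₂ g₂ d₂ ∈ distTriang C)
    {g₃ : T'.obj₃ ⟶ B₃} {d₃ : B₃ ⟶ T.obj₃⟦(1 : ℤ)⟧} (h₃ : Triangle.mk φ.hom₃ g₃ d₃ ∈ distTriang C)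
    {n : ℤ} (hB₁ : IsZero ((F.shift n).obj B₁)) (hB₃ : IsZero ((F.shift n).obj B₃)) :
    IsZero ((F.shift n).obj B₂) := by
  obtain ⟨epi₁, mono₁⟩ := (isZero_shift_obj₃_iff F h₁ rfl).1 hB₁
  obtain ⟨epi₃, mono₃⟩ := (isZero_shift_obj₃_iff F h₃ rfl).1 hB₃
  have exact := F.homologySequenceComposableArrows₅_exact T hT n (n + 1) rfl
  have exact' := F.homologySequenceComposableArrows₅_exact T' hT' n (n + 1) rfl
  refine (isZero_shift_obj₃_iff F h₂ rfl).2 ⟨?_, ?_⟩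
  · exact Abelian.epi_of_epi_of_epi_of_mono'' (by lia) exact exact' (homologySequenceHom F φ rfl)
      0 1 2 3 rfl rfl rfl rfl epi₁ epi₃ mono₁
  · exact Abelian.mono_of_epi_of_mono_of_mono'' (by lia) exact exact' (homologySequenceHom F φ rfl)
      2 3 4 5 rfl rfl rfl rfl epi₃ mono₁ mono₃

end HomologicalFunctor

section Star

variable {P P' Q Q' : Set C}

lemma star_of_iso {X Y : C} (e : X ≅ Y) (hX : X ∈ star P Q) : Y ∈ star P Q := by
  obtain ⟨A, hA, B, hB, f, g, h, hT⟩ := hX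
  exact ⟨A, hA, B, hB, f ≫ e.hom, e.inv ≫ g, h, isomorphic_distinguished _ hT _
    (Triangle.isoMk _ _ (Iso.refl A) e.symm (Iso.refl B)
    (show (f ≫ e.hom) ≫ e.inv = 𝟙 A ≫ f by simp) (show (e.inv ≫ g) ≫ 𝟙 B = e.inv ≫ g by simp)
    (show h ≫ (𝟙 A)⟦(1 : ℤ)⟧' = 𝟙 B ≫ h by simp))⟩

lemma shift_mem_star {n : ℤ} (hP : ∀ A ∈ P, A⟦n⟧ ∈ P') (hQ : ∀ B ∈ Q, B⟦n⟧ ∈ Q') {X : C}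
    (hX : X ∈ star P Q) : X⟦n⟧ ∈ star P' Q' := by
  obtain ⟨A, hA, B, hB, f, g, h, hT⟩ := hX
  exact ⟨_, hP A hA, _, hQ B hB, _, _, _, Triangle.shift_distinguished _ hT n⟩

end Star

section ShSet

variable {D : Type*} [Category D] [HasShift D ℤ] {S : Set D}

lemma shift_mem_shSet {X : D} (hX : X ∈ S) (n : ℤ) : X⟦n⟧ ∈ shSet S n :=
  ⟨X, hX, ⟨Iso.refl _⟩⟩

lemma shSet_of_iso {n : ℤ} {X Y : D} (e : X ≅ Y) (hX : X ∈ shSet S n) : Y ∈ shSet S n := by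
  obtain ⟨Z, hZ, ⟨e'⟩⟩ := hX
  exact ⟨Z, hZ, ⟨e.symm ≪≫ e'⟩⟩

lemma mem_shSet_iff (hS : ∀ {X Y : D}, (X ≅ Y) → X ∈ S → Y ∈ S) {n m : ℤ} (hnm : n + m = 0)
    {X : D} : X ∈ shSet S n ↔ X⟦m⟧ ∈ S := by
  refine ⟨fun ⟨Y, hY, ⟨e⟩⟩ ↦ hS ?_ hY, fun h ↦ ⟨_, h, ⟨?_⟩⟩⟩
  · exact (shiftFunctorCompIsoId D n m hnm).symm.app Y ≪≫ (shiftFunctor D m).mapIso e.symm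
  · exact (shiftFunctorCompIsoId D m n (by lia)).symm.app X

end ShSet

section RightOrthogonal

variable {D : Type*} [Category D] [Preadditive D] {S : Set D}

lemma rOrth_anti {S' : Set D} (h : S ⊆ S') : rOrth S' ⊆ rOrth S :=
  fun _ hY X hX ↦ hY X (h hX)

lemma rOrth_of_iso {X Y : D} (e : X ≅ Y) (hX : X ∈ rOrth S) : Y ∈ rOrth S := fun Z hZ f ↦ by
  rw [← cancel_mono e.inv, hX Z hZ (f ≫ e.inv), zero_comp]

lemma shift_mem_rOrth_shSet [HasShift D ℤ] [∀ n : ℤ, (shiftFunctor D n).Additive] {Y : D}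
    (hY : Y ∈ rOrth S) (n : ℤ) : Y⟦n⟧ ∈ rOrth (shSet S n) := by
  rintro X ⟨Z, hZ, ⟨e⟩⟩ f
  obtain ⟨g, hg⟩ := (shiftFunctor D n).map_surjective (e.inv ≫ f)
  rw [← cancel_epi e.inv, ← hg, hY Z hZ g, Functor.map_zero, comp_zero]

lemma mem_rOrth_iff_isZero [HasShift D ℤ] {Y : D} :
    Y ∈ rOrth S ↔ ∀ X ∈ S, IsZero (((preadditiveCoyoneda.obj (.op X)).shift (0 : ℤ)).obj Y) := by
  refine forall₂_congr fun X _ ↦ ?_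
  rw [(((preadditiveCoyoneda.obj (.op X)).isoShiftZero ℤ).app Y).isZero_iff,
    AddCommGrpCat.isZero_iff_subsingleton]
  exact (subsingleton_iff_forall_eq (0 : X ⟶ Y)).symm

end RightOrthogonal

section TriangulatedRightOrthogonal

variable {S : Set C}

lemma mem_rOrth_of_distTriang {T : Triangle C} (hT : T ∈ distTriang C) (h₁ : T.obj₁ ∈ rOrth S)
    (h₃ : T.obj₃ ∈ rOrth S) : T.obj₂ ∈ rOrth S := fun X hX k ↦ by
  obtain ⟨l, rfl⟩ := Triangle.coyoneda_exact₂ T hT k (h₃ X hX _)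
  rw [h₁ X hX l, zero_comp]

lemma mem_rOrth_star {P Q : Set C} {Y : C} (hP : Y ∈ rOrth P) (hQ : Y ∈ rOrth Q) :
    Y ∈ rOrth (star P Q) := by
  rintro X ⟨A, hA, B, hB, f, g, h, hT⟩ k
  obtain ⟨l, rfl⟩ : ∃ l : B ⟶ Y, k = g ≫ l := Triangle.yoneda_exact₂ _ hT k (hP A hA _)
  rw [hQ B hB l, comp_zero]

lemma mem_rOrth_of_cones {T T' : Triangle C} (hT : T ∈ distTriang C) (hT' : T' ∈ distTriang C)
    (φ : T ⟶ T') {B₁ B₂ B₃ : C}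
    {g₁ : T'.obj₁ ⟶ B₁} {d₁ : B₁ ⟶ T.obj₁⟦(1 : ℤ)⟧} (h₁ : Triangle.mk φ.hom₁ g₁ d₁ ∈ distTriang C)
    {g₂ : T'.obj₂ ⟶ B₂} {d₂ : B₂ ⟶ T.obj₂⟦(1 : ℤ)⟧} (h₂ : Triangle.mk φ.hom₂ g₂ d₂ ∈ distTriang C)
    {g₃ : T'.obj₃ ⟶ B₃} {d₃ : B₃ ⟶ T.obj₃⟦(1 : ℤ)⟧} (h₃ : Triangle.mk φ.hom₃ g₃ d₃ ∈ distTriang C)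
    (hB₁ : B₁ ∈ rOrth S) (hB₃ : B₃ ∈ rOrth S) : B₂ ∈ rOrth S := by
  rw [mem_rOrth_iff_isZero] at hB₁ hB₃ ⊢
  exact fun X hX ↦ isZero_shift_obj_of_cones _ hT hT' φ h₁ h₂ h₃ (hB₁ X hX) (hB₃ X hX)

end TriangulatedRightOrthogonal

lemma exists_hom_of_comp_mor₃_eq_zero {T : Triangle C} (hT : T ∈ distTriang C) {A₁ B₁ A₃ : C}
    {p : A₁ ⟶ T.obj₁} {q : T.obj₁ ⟶ B₁} {r : B₁ ⟶ A₁⟦(1 : ℤ)⟧}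
    (hp : Triangle.mk p q r ∈ distTriang C) {s : A₃ ⟶ T.obj₃}
    (hs : (s ≫ T.mor₃) ≫ q⟦(1 : ℤ)⟧' = 0) :
    ∃ (A : C) (u : A₁ ⟶ A) (w : A ⟶ A₃) (d : A₃ ⟶ A₁⟦(1 : ℤ)⟧)
      (_ : Triangle.mk u w d ∈ distTriang C) (φ : Triangle.mk u w d ⟶ T),
      φ.hom₁ = p ∧ φ.hom₃ = s := by
  obtain ⟨d, hd⟩ : ∃ d : A₃ ⟶ A₁⟦(1 : ℤ)⟧, s ≫ T.mor₃ = d ≫ (-p⟦(1 : ℤ)⟧') :=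
    Triangle.coyoneda_exact₁ _ (rot_of_distTriang _ hp) _ hs
  have comm₃ : (-d) ≫ p⟦(1 : ℤ)⟧' = s ≫ T.mor₃ := by
    rw [hd, Preadditive.comp_neg, Preadditive.neg_comp]
  obtain ⟨A, u, w, hA⟩ := distinguished_cocone_triangle₂ (-d)
  obtain ⟨m, comm₁, comm₂⟩ := complete_distinguished_triangle_morphism₂ _ _ hA hT p s comm₃
  exact ⟨A, u, w, -d, hA, ⟨p, m, s, comm₁, comm₂, comm₃⟩, rfl, rfl⟩

section TStructure

variable {S le : Set C}

namespace IsTStructureOn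

lemma shSet_one_subset (h : IsTStructureOn S le) : shSet le 1 ⊆ le := by
  rintro X ⟨Y, hY, ⟨e⟩⟩
  exact h.isoClosed e.symm (h.shift Y hY)

lemma subset_shSet_neg_one (h : IsTStructureOn S le) : le ⊆ shSet le (-1) :=
  fun X hX ↦ (mem_shSet_iff h.isoClosed (by lia)).2 (h.shift X hX)

protected lemma shSet (h : IsTStructureOn S le) (hS : IsTriangulatedSub S) (n : ℤ) :
    IsTStructureOn S (shSet le n) where
  subset X := by
    rintro ⟨Y, hY, ⟨e⟩⟩
    exact hS.isoClosed e.symm (hS.shift n Y (h.subset hY))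
  isoClosed := shSet_of_iso
  shift := by
    rintro X ⟨Y, hY, ⟨e⟩⟩
    exact ⟨_, h.shift Y hY, ⟨(shiftFunctor C 1).mapIso e ≪≫ shiftComm Y n 1⟩⟩
  exists_triangle E hE := by
    obtain ⟨A, B, hA, hB, f, g, k, hT⟩ := h.exists_triangle _ (hS.shift (-n) E hE)
    have hB' : ∀ X ∈ S ∩ rOrth le, X⟦n⟧ ∈ S ∩ rOrth (shSet le n) := fun X hX ↦
      ⟨hS.shift n X hX.1, shift_mem_rOrth_shSet hX.2 n⟩
    have hE' : E⟦-n⟧⟦n⟧ ∈ star (shSet le n) (S ∩ rOrth (shSet le n)) :=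
      shift_mem_star (fun _ hX ↦ shift_mem_shSet hX n) hB' ⟨A, hA, B, hB, f, g, k, hT⟩
    obtain ⟨A', hA', B', hB', f', g', k', hT'⟩ :=
      star_of_iso ((shiftFunctorCompIsoId C (-n) n (by lia)).app E) hE'
    exact ⟨A', B', hA', hB', f', g', k', hT'⟩

lemma monotone_shift_mem (h : IsTStructureOn S le) (E : C) : Monotone fun n : ℤ ↦ E⟦n⟧ ∈ le :=
  monotone_int_of_le_succ fun n hn ↦
    h.isoClosed ((shiftFunctorAdd C n 1).symm.app E) (h.shift _ hn)

lemma antitone_shift_mem_rOrth (h : IsTStructureOn S le) (E : C) :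
    Antitone fun n : ℤ ↦ E⟦n⟧ ∈ rOrth le :=
  antitone_int_of_succ_le fun n hn ↦
    rOrth_of_iso ((shiftFunctorAdd' C (n + 1) (-1) n (by lia)).symm.app E)
      (rOrth_anti h.subset_shSet_neg_one (shift_mem_rOrth_shSet hn (-1)))

lemma mem_leN_iff (h : IsTStructureOn S le) {i : ℤ} {E : C} : E ∈ leN le i ↔ E⟦i⟧ ∈ le :=
  mem_shSet_iff h.isoClosed (by lia)

end IsTStructureOn

lemma mem_geN_iff (hS : IsTriangulatedSub S) {j : ℤ} {E : C} :
    E ∈ geN S le j ↔ E⟦j - 1⟧ ∈ S ∩ rOrth le :=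
  mem_shSet_iff (S := S ∩ rOrth le) (fun e hX ↦ ⟨hS.isoClosed e hX.1, rOrth_of_iso e hX.2⟩) (by lia)

lemma isBoundedOn_iff_eventually (hS : IsTriangulatedSub S) (h : IsTStructureOn S le) :
    IsBoundedOn S le ↔ ∀ E ∈ S,
      (∀ᶠ n : ℤ in .atTop, E⟦n⟧ ∈ le) ∧ ∀ᶠ n : ℤ in .atBot, E⟦n⟧ ∈ rOrth le := by
  refine forall₂_congr fun E hE ↦ ⟨?_, ?_⟩
  · rintro ⟨i, j, hi, hj⟩
    exact ⟨Filter.eventually_atTop.2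
        ⟨i, fun _ hn ↦ h.monotone_shift_mem E hn (h.mem_leN_iff.1 hi)⟩,
      Filter.eventually_atBot.2
        ⟨j - 1, fun _ hn ↦ h.antitone_shift_mem_rOrth E hn ((mem_geN_iff hS).1 hj).2⟩⟩
  · rintro ⟨hle, hge⟩
    obtain ⟨i, hi⟩ := hle.exists
    obtain ⟨j, hj⟩ := hge.exists
    refine ⟨i, j + 1, h.mem_leN_iff.2 hi, (mem_geN_iff hS).2 ⟨hS.shift _ E hE, ?_⟩⟩
    rwa [add_sub_cancel_right]

lemma isTriangulatedSub_univ : IsTriangulatedSub (Set.univ : Set C) where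
  zero _ _ := trivial
  isoClosed _ _ := trivial
  shift _ _ _ := trivial
  ext₂ _ _ _ _ := trivial

end TStructure

section Glued

variable {S₁ S₂ le₁ le₂ : Set C}

lemma IsSOD.mem_rOrth_glued (hSOD : IsSOD S₁ S₂) (h₂ : le₂ ⊆ S₂) {Y : C} (hY : Y ∈ S₁)
    (hY' : Y ∈ rOrth (shSet le₁ 1)) : Y ∈ rOrth (glued le₁ le₂) :=
  mem_rOrth_star (fun X hX ↦ hSOD.orth X (h₂ hX) Y hY) hY'

lemma Compatible.inter_rOrth_subset {D : Type*} [Category D] [Preadditive D] {S₂ le₁ le₂ : Set D}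
    (hcomp : Compatible S₂ le₁ le₂) : S₂ ∩ rOrth le₂ ⊆ rOrth le₁ :=
  fun Y hY X hX ↦ hcomp X hX Y hY

lemma Compatible.mem_rOrth_glued (hcomp : Compatible S₂ le₁ le₂) (h₁ : shSet le₁ 1 ⊆ le₁) {Y : C}
    (hY : Y ∈ S₂ ∩ rOrth le₂) : Y ∈ rOrth (glued le₁ le₂) :=
  mem_rOrth_star hY.2 (rOrth_anti h₁ (hcomp.inter_rOrth_subset hY))

lemma exists_triangle_glued (hSOD : IsSOD S₁ S₂) (h₁ : IsTStructureOn S₁ le₁)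
    (h₂ : IsTStructureOn S₂ le₂) (hcomp : Compatible S₂ le₁ le₂) (E : C) :
    ∃ (A B : C) (_ : A ∈ glued le₁ le₂) (_ : B ∈ rOrth (glued le₁ le₂))
      (f : A ⟶ E) (g : E ⟶ B) (h : B ⟶ A⟦(1 : ℤ)⟧), Triangle.mk f g h ∈ distTriang C := by
  obtain ⟨E₂, E₁, hE₂, hE₁, f, g, h, hE⟩ := hSOD.exists_triangle E
  obtain ⟨A₂, B₂, hA₂, hB₂, p₂, q₂, r₂, hT₂⟩ := h₂.exists_triangle E₂ hE₂
  obtain ⟨A₁, B₁, hA₁, hB₁, p₁, q₁, r₁, hT₁⟩ := (h₁.shSet hSOD.sub₁ 1).exists_triangle E₁ hE₁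
  have hzero : (p₁ ≫ h) ≫ q₂⟦(1 : ℤ)⟧' = 0 :=
    shift_mem_rOrth_shSet (hcomp.inter_rOrth_subset hB₂) 1 A₁ hA₁ _
  obtain ⟨A, u, w, d, hA, φ, rfl, rfl⟩ := exists_hom_of_comp_mor₃_eq_zero hE hT₂ hzero
  obtain ⟨B, g', h', hB⟩ := distinguished_cocone_triangle φ.hom₂
  have hB₁' := hSOD.mem_rOrth_glued h₂.subset hB₁.1 hB₁.2
  have hB₂' := hcomp.mem_rOrth_glued h₁.shSet_one_subset hB₂
  exact ⟨A, B, ⟨A₂, hA₂, A₁, hA₁, u, w, d, hA⟩,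
    mem_rOrth_of_cones hA hE φ hT₂ hB hT₁ hB₂' hB₁', φ.hom₂, g', h', hB⟩

theorem isTStructureOn_glued (hSOD : IsSOD S₁ S₂) (h₁ : IsTStructureOn S₁ le₁)
    (h₂ : IsTStructureOn S₂ le₂) (hcomp : Compatible S₂ le₁ le₂) :
    IsTStructureOn Set.univ (glued le₁ le₂) where
  subset := Set.subset_univ _
  isoClosed := star_of_iso
  shift _ := shift_mem_star h₂.shift (h₁.shSet hSOD.sub₁ 1).shift
  exists_triangle E _ := by
    simpa only [Set.univ_inter] using exists_triangle_glued hSOD h₁ h₂ hcomp E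

lemma eventually_shift_mem_glued {T : Triangle C} (hT : T ∈ distTriang C)
    (h₂ : ∀ᶠ n : ℤ in .atTop, T.obj₁⟦n⟧ ∈ le₂) (h₁ : ∀ᶠ n : ℤ in .atTop, T.obj₃⟦n⟧ ∈ le₁) :
    ∀ᶠ n : ℤ in .atTop, T.obj₂⟦n⟧ ∈ glued le₁ le₂ := by
  have h₁' : ∀ᶠ n : ℤ in .atTop, T.obj₃⟦n + -1⟧ ∈ le₁ :=
    (Filter.tendsto_atTop_add_const_right _ (-1) Filter.tendsto_id).eventually h₁
  filter_upwards [h₂, h₁'] with n hn₂ hn₁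
  exact ⟨_, hn₂, _, ⟨_, hn₁, ⟨(shiftFunctorAdd' C (n + -1) 1 n (by lia)).app T.obj₃⟩⟩,
    _, _, _, Triangle.shift_distinguished T hT n⟩

theorem isBoundedOn_glued (hSOD : IsSOD S₁ S₂) (h₁ : IsTStructureOn S₁ le₁)
    (h₂ : IsTStructureOn S₂ le₂) (hcomp : Compatible S₂ le₁ le₂)
    (hb₁ : IsBoundedOn S₁ le₁) (hb₂ : IsBoundedOn S₂ le₂) :
    IsBoundedOn Set.univ (glued le₁ le₂) := by
  rw [isBoundedOn_iff_eventually isTriangulatedSub_univ (isTStructureOn_glued hSOD h₁ h₂ hcomp)]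
  intro E _
  obtain ⟨E₂, E₁, hE₂, hE₁, f, g, h, hE⟩ := hSOD.exists_triangle E
  obtain ⟨le_E₁, ge_E₁⟩ := (isBoundedOn_iff_eventually hSOD.sub₁ h₁).1 hb₁ E₁ hE₁
  obtain ⟨le_E₂, ge_E₂⟩ := (isBoundedOn_iff_eventually hSOD.sub₂ h₂).1 hb₂ E₂ hE₂
  refine ⟨eventually_shift_mem_glued hE le_E₂ le_E₁, ?_⟩
  filter_upwards [ge_E₁, ge_E₂] with n hn₁ hn₂
  exact mem_rOrth_of_distTriang (Triangle.shift_distinguished _ hE n)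
    (hcomp.mem_rOrth_glued h₁.shSet_one_subset ⟨hSOD.sub₂.shift n E₂ hE₂, hn₂⟩)
    (hSOD.mem_rOrth_glued h₂.subset (hSOD.sub₁.shift n E₁ hE₁)
      (rOrth_anti h₁.shSet_one_subset hn₁))

end Glued

/-- Theorem 2.7, item 1, boundedness: if the compatible t-structures
`le₁` and `le₂` are bounded, then the glued t-structure `T₂^{≤0} * (T₁^{≤0}[1])` is a
bounded t-structure on `C`. -/
theorem glued_isBounded {C : Type u} [Category.{v} C] [HasZeroObject C] [Preadditive C]
    [HasShift C ℤ] [∀ n : ℤ, (shiftFunctor C n).Additive] [Pretriangulated C]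
    (S₁ S₂ le₁ le₂ : Set C) (hSOD : IsSOD S₁ S₂)
    (h₁ : IsTStructureOn S₁ le₁) (h₂ : IsTStructureOn S₂ le₂)
    (hcomp : Compatible S₂ le₁ le₂)
    (hb₁ : IsBoundedOn S₁ le₁) (hb₂ : IsBoundedOn S₂ le₂) :
    IsTStructureOn Set.univ (glued le₁ le₂) ∧ IsBoundedOn Set.univ (glued le₁ le₂) := by
  exact ⟨isTStructureOn_glued hSOD h₁ h₂ hcomp, isBoundedOn_glued hSOD h₁ h₂ hcomp hb₁ hb₂⟩

end Paper
end

section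
/- Let T be a triangulated category with a semiorthogonal decomposition T = ⟨T₁, T₂⟩, and let T₁^{≤0} and T₂^{≤0} be compatible t-structures on T₁ and T₂ with hearts A₁ and A₂, giving the t-structure T^{≤0} := T₂^{≤0} * (T₁^{≤0}[1]) on T with heart A. If at least one of A₁, A₂ is nonzero, then dim_T A = max{ dim_{T₁} A₁, dim_{T₂} A₂, rdim_T(A₁, A₂) + 1 }. -/
open CategoryTheory Category Limits Pretriangulated

namespace Paper

universe v u

variable {C : Type u} [Category.{v} C] [HasZeroObject C] [Preadditive C]
  [HasShift C ℤ] [∀ n : ℤ, (shiftFunctor C n).Additive] [Pretriangulated C]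

/-- The homological dimension `dim_C H` of a full subcategory `H` (e.g. a heart):
the supremum (in the extended reals) of the integers `n` such that `Hom(A, B[n]) ≠ 0`
for some `A, B ∈ H`. -/
noncomputable def homDim (H : Set C) : EReal :=
  sSup {x : EReal | ∃ n : ℤ, x = ((n : ℝ) : EReal) ∧
    ∃ A ∈ H, ∃ B ∈ H, ∃ f : A ⟶ B⟦n⟧, f ≠ 0}

open Classical in
/-- The relative dimension `rdim_C (H₁, H₂)`: the supremum of the integers `m` with
`Hom(H₁, H₂[m]) ≠ 0` if there is such an integer, and `-1` otherwise. -/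
noncomputable def relDim (H₁ H₂ : Set C) : EReal :=
  if (∃ m : ℤ, ∃ A ∈ H₁, ∃ B ∈ H₂, ∃ f : A ⟶ B⟦m⟧, f ≠ 0) then
    sSup {x : EReal | ∃ m : ℤ, x = ((m : ℝ) : EReal) ∧
      ∃ A ∈ H₁, ∃ B ∈ H₂, ∃ f : A ⟶ B⟦m⟧, f ≠ 0}
  else (-1 : EReal)

/-! Write `Hᵢ` for the hearts. The heart of the glued structure contains `H₂` and `H₁[1]`, and
each of its objects is an extension of an object of `H₁[1]` by one of `H₂`. Hence `Hom(-, -[n])` is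
nonzero on the glued heart exactly when it is nonzero on one of the four pairs formed from `H₂` and
`H₁[1]`. The pair `(H₂, H₁[1])` never contributes, by semiorthogonality; `(H₁[1], H₁[1])` and
`(H₂, H₂)` give the degrees of the two hearts, and `(H₁[1], H₂)` the degrees of `(H₁, H₂)` raised
by one. Taking suprema gives the formula, where a nonzero object puts degree `0` on the left and so
absorbs the convention `rdim = -1`. -/

section Shift

omit [HasZeroObject C] [Preadditive C] [∀ n : ℤ, (shiftFunctor C n).Additive]
  [Pretriangulated C]

lemma subsingleton_shift_hom_shift_iff {X Y : C} (n : ℤ) :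
    Subsingleton (X⟦n⟧ ⟶ Y⟦n⟧) ↔ Subsingleton (X ⟶ Y) :=
  (Functor.FullyFaithful.ofFullyFaithful (shiftFunctor C n)).homEquiv.symm.subsingleton_congr

lemma shift_mem_shSet_s4 {H : Set C} {A : C} (hA : A ∈ H) (n : ℤ) : A⟦n⟧ ∈ shSet H n :=
  ⟨A, hA, ⟨Iso.refl _⟩⟩

/-- The set of degrees `n` in which `Hom(A, B[n]) ≠ 0` for some `A ∈ H` and `B ∈ K`. The dimension
of a heart and the relative dimension of two hearts are suprema of such sets. Nonvanishing is
encoded as nontriviality of the group of morphisms. -/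
def homDegrees (H K : Set C) : Set ℤ := {n | ∃ A ∈ H, ∃ B ∈ K, Nontrivial (A ⟶ B⟦n⟧)}

variable {H H' K K' : Set C}

lemma homDegrees_mono (hH : H ⊆ H') (hK : K ⊆ K') : homDegrees H K ⊆ homDegrees H' K' :=
  fun _ ⟨A, hA, B, hB, h⟩ => ⟨A, hH hA, B, hK hB, h⟩

lemma subsingleton_of_notMem_homDegrees {A B : C} {n : ℤ} (hA : A ∈ H) (hB : B ∈ K)
    (hn : n ∉ homDegrees H K) : Subsingleton (A ⟶ B⟦n⟧) :=
  not_nontrivial_iff_subsingleton.1 fun h => hn ⟨A, hA, B, hB, h⟩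

lemma homDegrees_shSet_left (H K : Set C) (a : ℤ) :
    homDegrees (shSet H a) K = (· + a) '' homDegrees H K := by
  have homEquiv (A B : C) (n : ℤ) : (A⟦a⟧ ⟶ B⟦n + a⟧) ≃ (A ⟶ B⟦n⟧) :=
    ((shiftEquiv C a).toAdjunction.homEquiv A (B⟦n + a⟧)).trans
      ((Iso.refl A).homCongr ((shiftFunctorAdd' C (n + a) (-a) n (by lia)).app B).symm)
  ext m
  constructor
  · rintro ⟨A', ⟨A, hA, ⟨e⟩⟩, B, hB, h⟩
    obtain ⟨n, rfl⟩ : ∃ n, m = n + a := ⟨m - a, by lia⟩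
    exact ⟨n, ⟨A, hA, B, hB, ((e.homCongr (Iso.refl _)).trans (homEquiv A B n)).symm.nontrivial⟩,
      rfl⟩
  · rintro ⟨n, ⟨A, hA, B, hB, h⟩, rfl⟩
    exact ⟨A⟦a⟧, shift_mem_shSet_s4 hA a, B, hB, (homEquiv A B n).nontrivial⟩

lemma homDegrees_shSet_right (H K : Set C) (b : ℤ) :
    homDegrees H (shSet K b) = (· - b) '' homDegrees H K := by
  have homEquiv (A B : C) (n : ℤ) : (A ⟶ B⟦b⟧⟦n - b⟧) ≃ (A ⟶ B⟦n⟧) :=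
    (Iso.refl A).homCongr ((shiftFunctorAdd' C b (n - b) n (by lia)).app B).symm
  ext m
  constructor
  · rintro ⟨A, hA, B', ⟨B, hB, ⟨e⟩⟩, h⟩
    obtain ⟨n, rfl⟩ : ∃ n, m = n - b := ⟨m + b, by lia⟩
    exact ⟨n, ⟨A, hA, B, hB, (((Iso.refl A).homCongr ((shiftFunctor C (n - b)).mapIso e)).trans
      (homEquiv A B n)).symm.nontrivial⟩, rfl⟩
  · rintro ⟨n, ⟨A, hA, B, hB, h⟩, rfl⟩
    exact ⟨A, hA, B⟦b⟧, shift_mem_shSet_s4 hB b, (homEquiv A B n).nontrivial⟩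

lemma homDegrees_shSet_shSet (H K : Set C) (a : ℤ) :
    homDegrees (shSet H a) (shSet K a) = homDegrees H K := by
  rw [homDegrees_shSet_left, homDegrees_shSet_right, Set.image_image]
  simp only [sub_add_cancel, Set.image_id']

end Shift

section Dimension

omit [HasZeroObject C] [∀ n : ℤ, (shiftFunctor C n).Additive] [Pretriangulated C]

variable {H K : Set C}

omit [HasShift C ℤ] in
lemma subsingleton_end_iff_isZero {X : C} : Subsingleton (X ⟶ X) ↔ IsZero X :=
  ⟨fun _ => (IsZero.iff_id_eq_zero X).2 (Subsingleton.elim _ _), fun h => ⟨h.eq_of_src⟩⟩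

lemma zero_mem_homDegrees {A : C} (hA : A ∈ H) (hA₀ : ¬ IsZero A) : 0 ∈ homDegrees H H := by
  refine ⟨A, hA, A, hA, ?_⟩
  rw [← subsingleton_end_iff_isZero, not_subsingleton_iff_nontrivial] at hA₀
  have e : A⟦(0 : ℤ)⟧ ≅ A := (shiftFunctorZero C ℤ).app A
  exact ((Iso.refl A).homCongr e).nontrivial

lemma mem_homDegrees_iff {n : ℤ} :
    n ∈ homDegrees H K ↔ ∃ A ∈ H, ∃ B ∈ K, ∃ f : A ⟶ B⟦n⟧, f ≠ 0 := by
  simp only [homDegrees, Set.mem_ofPred_eq, nontrivial_iff_exists_ne (0 : _ ⟶ _)]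

lemma sSup_eq_iSup_homDegrees :
    sSup {x : EReal | ∃ n : ℤ, x = ((n : ℝ) : EReal) ∧
      ∃ A ∈ H, ∃ B ∈ K, ∃ f : A ⟶ B⟦n⟧, f ≠ 0} = ⨆ n ∈ homDegrees H K, ((n : ℝ) : EReal) := by
  simp only [← mem_homDegrees_iff, ← sSup_image, Set.image, and_comm, eq_comm]

lemma homDim_eq_iSup : homDim H = ⨆ n ∈ homDegrees H H, ((n : ℝ) : EReal) :=
  sSup_eq_iSup_homDegrees

lemma zero_le_homDim {A : C} (hA : A ∈ H) (hA₀ : ¬ IsZero A) : 0 ≤ homDim H := by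
  rw [homDim_eq_iSup]
  exact le_iSup₂_of_le 0 (zero_mem_homDegrees hA hA₀) (by simp)

lemma relDim_eq_iSup (h : (homDegrees H K).Nonempty) :
    relDim H K = ⨆ n ∈ homDegrees H K, ((n : ℝ) : EReal) := by
  rw [relDim, if_pos (h.imp fun _ => mem_homDegrees_iff.1), sSup_eq_iSup_homDegrees]

lemma relDim_eq_neg_one (h : homDegrees H K = ∅) : relDim H K = -1 :=
  if_neg fun ⟨_, hn⟩ => h.subset (mem_homDegrees_iff.2 hn)

lemma iSup_intCast_add_one (s : Set ℤ) :
    ⨆ n ∈ (· + (1 : ℤ)) '' s, ((n : ℝ) : EReal) = (⨆ n ∈ s, ((n : ℝ) : EReal)) + 1 := by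
  have gc : GaloisConnection (· + 1 : EReal → EReal) (· - 1) := fun _ _ =>
    (EReal.le_sub_iff_add_le (.inl (EReal.coe_ne_bot 1)) (.inl (EReal.coe_ne_top 1))).symm
  rw [iSup_image, gc.l_iSup₂]
  simp only [Int.cast_add, Int.cast_one, EReal.coe_add, EReal.coe_one]

lemma max_relDim_add_one {x : EReal} (hx : 0 ≤ x) :
    max x (relDim H K + 1) = max x (⨆ n ∈ (· + (1 : ℤ)) '' homDegrees H K, ((n : ℝ) : EReal)) := by
  rcases (homDegrees H K).eq_empty_or_nonempty with h | h
  · have neg_one_add_one : (-1 : EReal) + 1 = 0 := by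
      rw [← EReal.coe_one, ← EReal.coe_neg, ← EReal.coe_add, neg_add_cancel, EReal.coe_zero]
    simp [h, relDim_eq_neg_one h, neg_one_add_one, hx]
  · rw [relDim_eq_iSup h, iSup_intCast_add_one]

end Dimension

section Heart

omit [HasZeroObject C] [∀ n : ℤ, (shiftFunctor C n).Additive] [Pretriangulated C]

/-- The heart `U ∩ U^⊥[1]` of a class of objects `U`, thought of as an aisle. Unlike `heartOn`, it
does not refer to an ambient triangulated subcategory. -/
def heart (U : Set C) : Set C := {E | E ∈ U ∧ ∀ X ∈ U, Subsingleton (X⟦(1 : ℤ)⟧ ⟶ E)}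

variable {S U : Set C}

lemma subsingleton_shift_hom_of_mem_geN_zero {Z E : C} (hE : E ∈ geN S U 0)
    (hZ : ∀ Y ∈ S ∩ rOrth U, ∀ f : Z ⟶ Y, f = 0) : Subsingleton (Z⟦(1 : ℤ)⟧ ⟶ E) := by
  obtain ⟨Y, hY, ⟨e : E ≅ Y⟦(1 : ℤ)⟧⟩⟩ := hE
  have := (subsingleton_shift_hom_shift_iff 1).2 (subsingleton_of_forall_eq 0 (hZ Y hY))
  exact ((Iso.refl _).homCongr e).subsingleton

lemma heartOn_eq_heart_of_subset (hU : ∀ {X Y : C}, (X ≅ Y) → X ∈ U → Y ∈ U) (hUS : U ⊆ S)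
    (hS : ∀ X ∈ S, X⟦(-1 : ℤ)⟧ ∈ S) : heartOn S U = heart U := by
  ext E
  constructor
  · rintro ⟨⟨X, hX, ⟨e⟩⟩, hE⟩
    exact ⟨hU (e ≪≫ (shiftFunctorZero C ℤ).app X).symm hX, fun Z hZ =>
      subsingleton_shift_hom_of_mem_geN_zero hE fun _ hY => hY.2 Z hZ⟩
  · rintro ⟨hE, hE'⟩
    refine ⟨⟨E, hE, ⟨((shiftFunctorZero C ℤ).app E).symm⟩⟩,
      ⟨E⟦(-1 : ℤ)⟧, ⟨hS E (hUS hE), fun X hX f => ?_⟩,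
        ⟨((shiftFunctorCompIsoId C (-1 : ℤ) 1 (by lia)).app E).symm⟩⟩⟩
    have homEquiv : (X⟦(1 : ℤ)⟧ ⟶ E) ≃ (X ⟶ E⟦(-1 : ℤ)⟧) :=
      (shiftEquiv C (1 : ℤ)).toAdjunction.homEquiv X E
    have := hE' X hX
    exact homEquiv.symm.subsingleton.elim f 0

end Heart

section Star

variable {H K X Y : Set C}

lemma subsingleton_hom_from_obj₂ {T : Triangle C} (hT : T ∈ distTriang C) {Y : C}
    (h₁ : Subsingleton (T.obj₁ ⟶ Y)) (h₃ : Subsingleton (T.obj₃ ⟶ Y)) :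
    Subsingleton (T.obj₂ ⟶ Y) := by
  refine subsingleton_of_forall_eq 0 fun f => ?_
  obtain ⟨g, rfl⟩ := T.yoneda_exact₂ hT f (Subsingleton.elim _ _)
  rw [Subsingleton.elim g 0, comp_zero]

lemma subsingleton_hom_to_obj₂ {T : Triangle C} (hT : T ∈ distTriang C) {X : C}
    (h₁ : Subsingleton (X ⟶ T.obj₁)) (h₃ : Subsingleton (X ⟶ T.obj₃)) :
    Subsingleton (X ⟶ T.obj₂) := by
  refine subsingleton_of_forall_eq 0 fun f => ?_
  obtain ⟨g, rfl⟩ := T.coyoneda_exact₂ hT f (Subsingleton.elim _ _)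
  rw [Subsingleton.elim g 0, zero_comp]

lemma subset_star_left (hY : ∃ Z ∈ Y, IsZero Z) : X ⊆ star X Y := by
  obtain ⟨Z, hZ, hZ₀⟩ := hY
  intro A hA
  exact ⟨A, hA, Z, hZ, 𝟙 A, 0, 0,
    (Triangle.distinguished_iff_of_isZero₃ _ hZ₀).2 (inferInstanceAs (IsIso (𝟙 A)))⟩

lemma subset_star_right (hX : ∃ Z ∈ X, IsZero Z) : Y ⊆ star X Y := by
  obtain ⟨Z, hZ, hZ₀⟩ := hX
  intro B hB
  exact ⟨Z, hZ, B, hB, 0, 𝟙 B, 0,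
    (Triangle.distinguished_iff_of_isZero₁ _ hZ₀).2 (inferInstanceAs (IsIso (𝟙 B)))⟩

lemma mem_star_of_iso {E F : C} (e : E ≅ F) (hE : E ∈ star X Y) : F ∈ star X Y := by
  obtain ⟨A, hA, B, hB, f, g, k, hT⟩ := hE
  exact ⟨A, hA, B, hB, f ≫ e.hom, e.inv ≫ g, k, isomorphic_distinguished _ hT _
    (Triangle.isoMk _ _ (Iso.refl A) e.symm (Iso.refl B)
      (show (f ≫ e.hom) ≫ e.inv = 𝟙 A ≫ f by simp)
      (show (e.inv ≫ g) ≫ 𝟙 B = e.inv ≫ g by simp)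
      (show k ≫ (𝟙 A)⟦(1 : ℤ)⟧' = 𝟙 B ≫ k by simp))⟩

lemma homDegrees_star_left_subset :
    homDegrees (star X Y) K ⊆ homDegrees X K ∪ homDegrees Y K := by
  rintro n ⟨E, ⟨A, hA, B, hB, f, g, k, hT⟩, F, hF, hn⟩
  contrapose! hn
  rw [Set.mem_union, not_or] at hn
  exact subsingleton_hom_from_obj₂ hT (subsingleton_of_notMem_homDegrees hA hF hn.1)
    (subsingleton_of_notMem_homDegrees hB hF hn.2)

lemma homDegrees_star_right_subset :
    homDegrees H (star X Y) ⊆ homDegrees H X ∪ homDegrees H Y := by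
  rintro n ⟨E, hE, F, ⟨A, hA, B, hB, f, g, k, hT⟩, hn⟩
  contrapose! hn
  rw [Set.mem_union, not_or] at hn
  exact subsingleton_hom_to_obj₂ (Triangle.shift_distinguished _ hT n)
    (subsingleton_of_notMem_homDegrees hE hA hn.1) (subsingleton_of_notMem_homDegrees hE hB hn.2)

end Star

section Gluing

variable {U₁ U₂ : Set C}

/-- The conditions on classes of objects `U₁` and `U₂` under which the heart of `glued U₁ U₂` is
assembled from their hearts: both contain a zero object, `U₁[1] ⊆ U₁`, `Hom(U₂, U₁[n]) = 0` for all
`n`, and `Hom(U₁[1], heart U₂) = 0`. They hold for the aisles of compatible t-structures on the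
components of a semiorthogonal decomposition. -/
structure IsGluingPair (U₁ U₂ : Set C) : Prop where
  exists_isZero₁ : ∃ Z ∈ U₁, IsZero Z
  exists_isZero₂ : ∃ Z ∈ U₂, IsZero Z
  shift_mem₁ : ∀ X ∈ U₁, X⟦(1 : ℤ)⟧ ∈ U₁
  orth : homDegrees U₂ U₁ = ∅
  compatible : ∀ X ∈ U₁, ∀ A ∈ heart U₂, Subsingleton (X⟦(1 : ℤ)⟧ ⟶ A)

lemma IsTStructureOn.zero_mem {S U : Set C} (h : IsTStructureOn S U) {Z : C} (hZS : Z ∈ S)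
    (hZ : IsZero Z) : Z ∈ U := by
  obtain ⟨A, B, hA, hB, f, g, k, hT⟩ := h.exists_triangle Z hZS
  -- Since `Z = 0`, the connecting map identifies `B ∈ U^⊥` with `A[1] ∈ U`.
  have : IsIso k := (Triangle.isZero₂_iff_isIso₃ _ hT).1 hZ
  have : Subsingleton (A⟦(1 : ℤ)⟧ ⟶ B) := subsingleton_of_forall_eq 0 (hB.2 _ (h.shift A hA))
  have hA₁ : Subsingleton (A⟦(1 : ℤ)⟧ ⟶ A⟦(1 : ℤ)⟧) :=
    ((Iso.refl _).homCongr (asIso k)).symm.subsingleton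
  have hA₀ : IsZero A :=
    subsingleton_end_iff_isZero.1 ((subsingleton_shift_hom_shift_iff 1).1 hA₁)
  exact h.isoClosed (hA₀.iso hZ) hA

lemma IsTStructureOn.heartOn_eq_heart {S U : Set C} (h : IsTStructureOn S U)
    (hS : IsTriangulatedSub S) : heartOn S U = heart U :=
  heartOn_eq_heart_of_subset h.isoClosed h.subset (hS.shift (-1))

open scoped ZeroObject in
lemma IsGluingPair.of_isSOD {S₁ S₂ : Set C} (hSOD : IsSOD S₁ S₂) (h₁ : IsTStructureOn S₁ U₁)
    (h₂ : IsTStructureOn S₂ U₂) (hcomp : Compatible S₂ U₁ U₂) : IsGluingPair U₁ U₂ where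
  exists_isZero₁ := ⟨0, h₁.zero_mem (hSOD.sub₁.zero 0 (isZero_zero C)) (isZero_zero C),
    isZero_zero C⟩
  exists_isZero₂ := ⟨0, h₂.zero_mem (hSOD.sub₂.zero 0 (isZero_zero C)) (isZero_zero C),
    isZero_zero C⟩
  shift_mem₁ := h₁.shift
  orth := by
    rw [Set.eq_empty_iff_forall_notMem]
    rintro n ⟨A, hA, B, hB, h⟩
    obtain ⟨f, hf⟩ := exists_ne (0 : A ⟶ B⟦n⟧)
    exact hf (hSOD.orth A (h₂.subset hA) _ (hSOD.sub₁.shift n B (h₁.subset hB)) f)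
  compatible := by
    intro X hX A hA
    rw [← h₂.heartOn_eq_heart hSOD.sub₂] at hA
    exact subsingleton_shift_hom_of_mem_geN_zero hA.2 (hcomp X hX)

omit [HasZeroObject C] [Pretriangulated C] in
lemma exists_isZero_shSet {H : Set C} (hH : ∃ Z ∈ H, IsZero Z) (n : ℤ) :
    ∃ Z ∈ shSet H n, IsZero Z := by
  obtain ⟨Z, hZ, hZ₀⟩ := hH
  exact ⟨Z⟦n⟧, shift_mem_shSet_s4 hZ n, (shiftFunctor C n).map_isZero hZ₀⟩

lemma mem_heart_glued_iff (hU₁ : ∃ Z ∈ U₁, IsZero Z) (hU₂ : ∃ Z ∈ U₂, IsZero Z) {E : C} :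
    E ∈ heart (glued U₁ U₂) ↔ E ∈ glued U₁ U₂ ∧ (∀ X ∈ U₂, Subsingleton (X⟦(1 : ℤ)⟧ ⟶ E)) ∧
      ∀ X ∈ U₁, Subsingleton (X⟦(1 : ℤ)⟧⟦(1 : ℤ)⟧ ⟶ E) := by
  refine and_congr_right fun _ => ⟨fun h => ⟨fun X hX => ?_, fun X hX => ?_⟩, ?_⟩
  · exact h X (subset_star_left (exists_isZero_shSet hU₁ 1) hX)
  · exact h _ (subset_star_right hU₂ (shift_mem_shSet_s4 hX 1))
  · rintro ⟨h₂, h₁⟩ Z ⟨A, hA, B, ⟨X, hX, ⟨e⟩⟩, f, g, k, hT⟩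
    refine subsingleton_hom_from_obj₂ (Triangle.shift_distinguished _ hT 1) (h₂ A hA) ?_
    have := h₁ X hX
    exact (((shiftFunctor C (1 : ℤ)).mapIso e).homCongr (Iso.refl E)).subsingleton

namespace IsGluingPair

lemma heart_right_subset (h : IsGluingPair U₁ U₂) : heart U₂ ⊆ heart (glued U₁ U₂) := by
  intro A hA
  rw [mem_heart_glued_iff h.exists_isZero₁ h.exists_isZero₂]
  exact ⟨subset_star_left (exists_isZero_shSet h.exists_isZero₁ 1) hA.1, hA.2,
    fun X hX => h.compatible _ (h.shift_mem₁ X hX) A hA⟩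

lemma shSet_heart_left_subset (h : IsGluingPair U₁ U₂) :
    shSet (heart U₁) 1 ⊆ heart (glued U₁ U₂) := by
  rintro E ⟨W, hW, ⟨e⟩⟩
  rw [mem_heart_glued_iff h.exists_isZero₁ h.exists_isZero₂]
  refine ⟨subset_star_right h.exists_isZero₂ ⟨W, hW.1, ⟨e⟩⟩, fun X hX => ?_, fun X hX => ?_⟩
  · have hXW : (1 : ℤ) ∉ homDegrees (shSet U₂ 1) U₁ := by
      simp [homDegrees_shSet_left, h.orth]
    have := subsingleton_of_notMem_homDegrees (shift_mem_shSet_s4 hX 1) hW.1 hXW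
    exact ((Iso.refl _).homCongr e).subsingleton
  · have := (subsingleton_shift_hom_shift_iff 1).2 (hW.2 X hX)
    exact ((Iso.refl _).homCongr e).subsingleton

lemma heart_glued_subset (h : IsGluingPair U₁ U₂) :
    heart (glued U₁ U₂) ⊆ star (heart U₂) (shSet (heart U₁) 1) := by
  intro E hE
  obtain ⟨⟨A, hA, B, hB, f, g, k, hT⟩, hE₂, hE₁⟩ :=
    (mem_heart_glued_iff h.exists_isZero₁ h.exists_isZero₂).1 hE
  have hA' : A ∈ heart U₂ := by
    refine ⟨hA, fun X hX => subsingleton_hom_to_obj₂ (inv_rot_of_distTriang _ hT) ?_ (hE₂ X hX)⟩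
    exact subsingleton_of_notMem_homDegrees (shift_mem_shSet_s4 hX 1) hB
      (by simp [homDegrees_shSet_shSet, h.orth])
  obtain ⟨W, hW, ⟨e⟩⟩ := hB
  have hW' : W ∈ heart U₁ := by
    refine ⟨hW, fun X hX => (subsingleton_shift_hom_shift_iff 1).1 ?_⟩
    have : Subsingleton (X⟦(1 : ℤ)⟧⟦(1 : ℤ)⟧ ⟶ B) :=
      subsingleton_hom_to_obj₂ (rot_of_distTriang _ hT) (hE₁ X hX)
        ((subsingleton_shift_hom_shift_iff 1).2 (h.compatible X hX A hA'))
    exact ((Iso.refl _).homCongr e).symm.subsingleton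
  exact ⟨A, hA', B, ⟨W, hW', ⟨e⟩⟩, f, g, k, hT⟩

omit [HasZeroObject C] [Preadditive C] [∀ n : ℤ, (shiftFunctor C n).Additive]
  [Pretriangulated C] in
lemma homDegrees_heart_right_shSet_heart_left (h : IsGluingPair U₁ U₂) :
    homDegrees (heart U₂) (shSet (heart U₁) 1) = ∅ := by
  rw [homDegrees_shSet_right, Set.image_eq_empty, ← Set.subset_empty_iff, ← h.orth]
  exact homDegrees_mono (fun _ => And.left) (fun _ => And.left)

lemma homDegrees_heart_glued (h : IsGluingPair U₁ U₂) :
    homDegrees (heart (glued U₁ U₂)) (heart (glued U₁ U₂)) =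
      homDegrees (heart U₁) (heart U₁) ∪ homDegrees (heart U₂) (heart U₂) ∪
        (· + 1) '' homDegrees (heart U₁) (heart U₂) := by
  rw [← homDegrees_shSet_shSet (heart U₁) _ 1, ← homDegrees_shSet_left]
  have left_subset := h.shSet_heart_left_subset
  have right_subset := h.heart_right_subset
  set H₁ := shSet (heart U₁) 1
  set H₂ := heart U₂
  apply Set.Subset.antisymm
  · calc
      homDegrees (heart (glued U₁ U₂)) (heart (glued U₁ U₂)) ⊆
          homDegrees (star H₂ H₁) (star H₂ H₁) :=
        homDegrees_mono h.heart_glued_subset h.heart_glued_subset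
      _ ⊆ (homDegrees H₂ H₂ ∪ homDegrees H₂ H₁) ∪ (homDegrees H₁ H₂ ∪ homDegrees H₁ H₁) :=
        homDegrees_star_left_subset.trans
          (Set.union_subset_union homDegrees_star_right_subset homDegrees_star_right_subset)
      _ = homDegrees H₁ H₁ ∪ homDegrees H₂ H₂ ∪ homDegrees H₁ H₂ := by
        rw [h.homDegrees_heart_right_shSet_heart_left, Set.union_empty]
        ac_rfl
  · exact Set.union_subset (Set.union_subset (homDegrees_mono left_subset left_subset)
      (homDegrees_mono right_subset right_subset)) (homDegrees_mono left_subset right_subset)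

end IsGluingPair

lemma heartOn_univ_glued : heartOn Set.univ (glued U₁ U₂) = heart (glued U₁ U₂) :=
  heartOn_eq_heart_of_subset mem_star_of_iso (Set.subset_univ _) fun _ _ => Set.mem_univ _

theorem glued_heart_dim_general (h : IsGluingPair U₁ U₂)
    (hnz : (∃ A ∈ heart U₁, ¬ IsZero A) ∨ (∃ A ∈ heart U₂, ¬ IsZero A)) :
    homDim (heart (glued U₁ U₂)) =
      max (max (homDim (heart U₁)) (homDim (heart U₂))) (relDim (heart U₁) (heart U₂) + 1) := by
  have zero_le_max : 0 ≤ max (homDim (heart U₁)) (homDim (heart U₂)) :=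
    le_max_iff.2 (hnz.imp (fun ⟨_, hA, hA₀⟩ => zero_le_homDim hA hA₀)
      fun ⟨_, hA, hA₀⟩ => zero_le_homDim hA hA₀)
  rw [max_relDim_add_one zero_le_max]
  simp only [homDim_eq_iSup, h.homDegrees_heart_glued, iSup_union]

end Gluing

/-- Theorem 2.7, item 3: if at least one of the hearts `A₁`, `A₂` is
nonzero, then the dimension of the glued heart is
`max { dim A₁, dim A₂, rdim(A₁, A₂) + 1 }`. -/
theorem glued_heart_dim {C : Type u} [Category.{v} C] [HasZeroObject C] [Preadditive C]
    [HasShift C ℤ] [∀ n : ℤ, (shiftFunctor C n).Additive] [Pretriangulated C]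
    (S₁ S₂ le₁ le₂ : Set C) (hSOD : IsSOD S₁ S₂)
    (h₁ : IsTStructureOn S₁ le₁) (h₂ : IsTStructureOn S₂ le₂)
    (hcomp : Compatible S₂ le₁ le₂)
    (hnz : (∃ A ∈ heartOn S₁ le₁, ¬ IsZero A) ∨ (∃ A ∈ heartOn S₂ le₂, ¬ IsZero A)) :
    homDim (heartOn Set.univ (glued le₁ le₂)) =
      max (max (homDim (heartOn S₁ le₁)) (homDim (heartOn S₂ le₂)))
        (relDim (heartOn S₁ le₁) (heartOn S₂ le₂) + 1) := by
  rw [h₁.heartOn_eq_heart hSOD.sub₁, h₂.heartOn_eq_heart hSOD.sub₂] at hnz ⊢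
  rw [heartOn_univ_glued]
  exact glued_heart_dim_general (.of_isSOD hSOD h₁ h₂ hcomp) hnz

end Paper
end
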